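/- Let f : {0,1}ⁿ → {0,1}ⁿ, let Q : ℝⁿ → [0,1]ⁿ be a continuous conversion of f, and let γ₁,…,γₙ > 0 be fixed. Then there exist μ > 0, T_min > 0, and a family (U^s)_{s∈{0,1}ⁿ} of nonempty open subsets of ℝ^{2n} with U^s ⊆ W^s ∩ [x⁻, x⁺]^{2n}, such that for every choice of γ_{n+1},…,γ_{2n} ∈ (0, μ), every s ∈ {0,1}ⁿ that is monotone for f and is not a fixed point of f, and every solution x of D₂(f,γ,Q) with x(0) ∈ U^s, there exists a time T ≥ T_min such that: (A) x(T) ∈ U^{f(s)}; (B) xᵢ(t) ≠ 0 for every i ∈ [n] with fᵢ(s) = sᵢ and every t ∈ [0, T]; (C) for every i ∈ [n] with fᵢ(s) ≠ sᵢ there is exactly one t ∈ [0, T] with xᵢ(t) = 0. -/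

import Mathlib

/-- The cubic `g(x) = 3x - x³ - 3`. -/
noncomputable def gcub (x : ℝ) : ℝ := 3 * x - x ^ 3 - 3

/-- The piecewise linear function `L`: `0` for `x ≤ -1`, `(x+1)/2` for
`-1 < x < 1`, and `1` for `x ≥ 1`. -/
noncomputable def Lpl (x : ℝ) : ℝ := if x ≤ -1 then 0 else if x < 1 then (x + 1) / 2 else 1

/-- `W^s ⊆ ℝⁿ`: the set of `x` with `xᵢ < -1` when `sᵢ = 0` and `xᵢ > 1`
when `sᵢ = 1`. -/
def Wset (n : ℕ) (s : Fin n → Bool) : Set (Fin n → ℝ) :=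
  {x | ∀ i, if s i then 1 < x i else x i < -1}

/-- `Q : ℝⁿ → [0,1]ⁿ` is a continuous conversion of the Boolean map `f`. -/
def IsConversion (n : ℕ) (f : (Fin n → Bool) → Fin n → Bool)
    (Q : (Fin n → ℝ) → Fin n → ℝ) : Prop :=
  Continuous Q ∧ (∀ x i, Q x i ∈ Set.Icc (0 : ℝ) 1) ∧
  ∀ s : Fin n → Bool, ∀ x ∈ Wset n s, ∀ i, Q x i = if f s i then 1 else 0

/-- `(x, y) : [0,∞) → ℝⁿ × ℝⁿ` is a solution of the system `D₂(f, γ, Q)`: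
`ẋᵢ = γᵢ (g(xᵢ) + 6 L(yᵢ))` and `ẏᵢ = γ'ᵢ (g(yᵢ) + 6 Qᵢ(x))`, where the
`xᵢ` are the signature variables and the `yᵢ = x_{n+i}` the signaling ones. -/
def IsSolD2 (n : ℕ) (γ γ' : Fin n → ℝ) (Q : (Fin n → ℝ) → Fin n → ℝ)
    (x y : ℝ → Fin n → ℝ) : Prop :=
  ∀ i : Fin n, ∀ t : ℝ, 0 ≤ t →
    HasDerivAt (fun u => x u i) (γ i * (gcub (x t i) + 6 * Lpl (y t i))) t ∧
    HasDerivAt (fun u => y u i) (γ' i * (gcub (y t i) + 6 * Q (x t) i)) t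

/-- The discretization `S(x)ᵢ = 1` iff `xᵢ > 0`. -/
noncomputable def Sdisc (n : ℕ) (x : Fin n → ℝ) : Fin n → Bool := fun i => decide (0 < x i)

/-- The switching set: some signature coordinate vanishes. -/
def Bzero (n : ℕ) : Set (Fin n → ℝ) := {x | ∃ i, x i = 0}

/-- `σ : ℕ → {0,1}ⁿ` is the Boolean itinerary of the trajectory `x : ℝ → P`
under the discretization `S` (with switching set `B`): there is a finite or
infinite strictly increasing sequence of switching times `t 0 = 0 < t 1 < ⋯`
(indices `< K`, tending to `∞` if `K = ⊤`) such that the trajectory stays off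
`B` except possibly at switching times, `S ∘ x` is constant equal to `σ k` on
the `k`-th interval (including `u = 0` for `k = 0`), the values on consecutive
intervals differ, and `σ` is extended constantly after the last interval.
This encodes the transversality property together with the itinerary. -/
def IsItinerary {P : Type*} (n : ℕ) (x : ℝ → P) (S : P → Fin n → Bool)
    (B : Set P) (σ : ℕ → Fin n → Bool) : Prop :=
  ∃ (K : ℕ∞) (t : ℕ → ℝ), 1 ≤ K ∧ t 0 = 0 ∧
    (∀ k : ℕ, ((k : ℕ∞) + 1) < K → t k < t (k + 1)) ∧
    (K = ⊤ → Filter.Tendsto t Filter.atTop Filter.atTop) ∧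
    (∀ u : ℝ, 0 ≤ u → (∀ k : ℕ, 1 ≤ k → (k : ℕ∞) < K → u ≠ t k) → x u ∉ B) ∧
    (∀ k : ℕ, (k : ℕ∞) < K → ∀ u : ℝ,
      (t k < u ∨ (k = 0 ∧ u = 0)) → (∀ _ : ((k : ℕ∞) + 1) < K, u < t (k + 1)) →
      S (x u) = σ k) ∧
    (∀ k : ℕ, ((k : ℕ∞) + 1) < K → σ (k + 1) ≠ σ k) ∧
    (∀ τ : ℕ, K ≤ (τ : ℕ∞) + 1 → σ (τ + 1) = σ τ)

open Set Filter Topology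

theorem aux_gain (v w v' w' : ℝ → ℝ) (t0 t1 c r D : ℝ) (h01 : t0 ≤ t1) (hr : 0 ≤ r)
    (hv : ∀ t ∈ Icc t0 t1, HasDerivAt v (v' t) t)
    (hw : ∀ t ∈ Icc t0 t1, HasDerivAt w (w' t) t)
    (hD : ∀ s ∈ Icc t0 t1, ∀ t ∈ Icc t0 t1, w s - w t ≤ D)
    (hpos : ∀ t ∈ Ioo t0 t1, v t ≤ c → r ≤ v' t + w' t) :
    min c (v t0 + r * (t1 - t0)) - D ≤ v t1 := by
  have hD0 : 0 ≤ D := by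
    have := hD t0 (left_mem_Icc.2 h01) t0 (left_mem_Icc.2 h01)
    linarith
  have key : ∀ s ∈ Icc t0 t1, (∀ u ∈ Ioo s t1, v u ≤ c) →
      v s + r * (t1 - s) - D ≤ v t1 := by
    intro s hs hu
    have hsub : Icc s t1 ⊆ Icc t0 t1 := Icc_subset_Icc_left hs.1
    have h1 := Convex.mul_sub_le_image_sub_of_le_deriv (D := Icc s t1) (convex_Icc s t1)
      (f := fun t => v t + w t) (C := r)
      (fun t ht => ((hv t (hsub ht)).add (hw t (hsub ht))).continuousAt.continuousWithinAt)
      (fun t ht => ((hv t (hsub (interior_subset ht))).add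
        (hw t (hsub (interior_subset ht)))).differentiableAt.differentiableWithinAt)
      (by
        intro t ht
        have e : deriv (fun t => v t + w t) t = v' t + w' t :=
          ((hv t (hsub (interior_subset ht))).add (hw t (hsub (interior_subset ht)))).deriv
        rw [e]
        rw [interior_Icc] at ht
        exact hpos t ⟨lt_of_le_of_lt hs.1 ht.1, ht.2⟩ (hu t ht))
      s (left_mem_Icc.2 hs.2) t1 (right_mem_Icc.2 hs.2) hs.2
    have h2 := hD t1 (right_mem_Icc.2 h01) s hs
    linarith
  by_cases hc : ∀ u ∈ Icc t0 t1, v u ≤ c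
  · have := key t0 (left_mem_Icc.2 h01) (fun u hu => hc u (Ioo_subset_Icc_self hu))
    have := min_le_right c (v t0 + r * (t1 - t0))
    linarith
  · push Not at hc
    obtain ⟨u, hu, huc⟩ := hc
    have hcont : ContinuousOn v (Icc t0 t1) := fun t ht => (hv t ht).continuousAt.continuousWithinAt
    have hcl : IsCompact (Icc t0 t1 ∩ v ⁻¹' (Ici c)) :=
      isCompact_Icc.of_isClosed_subset (hcont.preimage_isClosed_of_isClosed isClosed_Icc isClosed_Ici)
        inter_subset_left
    obtain ⟨s, ⟨hs, hsc⟩, hmax⟩ := hcl.exists_isGreatest ⟨u, hu, huc.le⟩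
    have := key s hs (by
      intro x hx
      by_contra hh
      push Not at hh
      have := hmax ⟨⟨hs.1.trans hx.1.le, hx.2.le⟩, hh.le⟩
      linarith [hx.1])
    have h3 : c ≤ v s := hsc
    have h4 : 0 ≤ r * (t1 - s) := mul_nonneg hr (by linarith [hs.2])
    have := min_le_left c (v t0 + r * (t1 - t0))
    linarith

theorem aux_barrier (v v' : ℝ → ℝ) (t0 t1 c : ℝ) (h01 : t0 ≤ t1)
    (hv : ∀ t ∈ Icc t0 t1, HasDerivAt v (v' t) t) (h0 : c ≤ v t0)
    (hpos : ∀ t ∈ Ico t0 t1, v t = c → 0 < v' t) : c ≤ v t1 := by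
  have := image_le_of_deriv_right_lt_deriv_boundary' (f := fun _ => c) (f' := fun _ => 0)
    (B := v) (B' := v') (a := t0) (b := t1) continuousOn_const
    (fun x _ => hasDerivWithinAt_const _ _ _) h0
    (fun t ht => (hv t ht).continuousAt.continuousWithinAt)
    (fun t ht => (hv t (Ico_subset_Icc_self ht)).hasDerivWithinAt)
    (fun t ht h => hpos t ht h.symm)
  exact this (right_mem_Icc.2 h01)

theorem aux_barrier_strict (v v' : ℝ → ℝ) (t0 t1 c : ℝ) (h01 : t0 < t1)
    (hv : ∀ t ∈ Icc t0 t1, HasDerivAt v (v' t) t) (h0 : c ≤ v t0)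
    (hpos : ∀ t ∈ Icc t0 t1, v t = c → 0 < v' t) : c < v t1 := by
  have hge : ∀ t ∈ Icc t0 t1, c ≤ v t := fun t ht =>
    aux_barrier v v' t0 t c ht.1 (fun u hu => hv u ⟨hu.1, hu.2.trans ht.2⟩) h0
      (fun u hu => hpos u ⟨hu.1, hu.2.le.trans ht.2⟩)
  refine lt_of_le_of_ne (hge t1 (right_mem_Icc.2 h01.le)) ?_
  intro he
  have hd := hv t1 (right_mem_Icc.2 h01.le)
  have hp := hpos t1 (right_mem_Icc.2 h01.le) he.symm
  have h1 := (hasDerivAt_iff_tendsto_slope_left_right.1 hd).1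
  have h2 : ∀ᶠ u in 𝓝[<] t1, 0 < slope v t1 u := h1.eventually (lt_mem_nhds hp)
  have h3 : ∀ᶠ u in 𝓝[<] t1, u ∈ Ioo t0 t1 := Ioo_mem_nhdsLT h01
  obtain ⟨u, hu1, hu2⟩ := (h2.and h3).exists
  rw [slope_def_field] at hu1
  have := hge u (Ioo_subset_Icc_self hu2)
  have h4 : (v u - v t1) / (u - t1) ≤ 0 :=
    div_nonpos_of_nonneg_of_nonpos (by linarith) (by linarith [hu2.2])
  linarith

/-- real induction on `[0,H]` -/
theorem aux_real_ind (P : ℝ → Prop) (H : ℝ)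
    (hopen : ∀ t, 0 ≤ t → P t → ∀ᶠ u in 𝓝 t, P u)
    (hstep : ∀ t, 0 ≤ t → t ≤ H → (∀ u, 0 ≤ u → u < t → P u) → P t) :
    ∀ t, 0 ≤ t → t ≤ H → P t := by
  intro t ht htH
  by_contra hn
  have hcl : IsClosed (Icc 0 H ∩ {t | ¬ P t}) := by
    rw [← isOpen_compl_iff, isOpen_iff_mem_nhds]
    intro x hx
    by_cases hx' : x ∈ Icc 0 H
    · have hP : P x := by
        by_contra h
        exact hx ⟨hx', h⟩
      filter_upwards [hopen x hx'.1 hP] with u hu h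
      exact h.2 hu
    · filter_upwards [isClosed_Icc.isOpen_compl.mem_nhds hx'] with u hu h
      exact hu h.1
  have hK : IsCompact (Icc 0 H ∩ {t | ¬ P t}) :=
    isCompact_Icc.of_isClosed_subset hcl inter_subset_left
  obtain ⟨s, ⟨hs, hsn⟩, hmin⟩ := hK.exists_isLeast ⟨t, ⟨ht, htH⟩, hn⟩
  refine hsn (hstep s hs.1 hs.2 ?_)
  intro u hu hus
  by_contra h
  have := hmin ⟨⟨hu, hus.le.trans hs.2⟩, h⟩
  linarith

/-- strict invariance of the box -/
theorem aux_box (v w : ℝ → ℝ) (g p : ℝ) (hg : 0 < g) (hp : 3 * p - p ^ 3 = -3) (hp2 : 2 < p)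
    (hv : ∀ t, 0 ≤ t → HasDerivAt v (g * (3 * v t - v t ^ 3 + 3 * w t)) t)
    (hw : ∀ t, 0 ≤ t → |w t| ≤ 1) (h0 : |v 0| < p) : ∀ t, 0 ≤ t → |v t| < p := by
  intro t ht
  have half : ∀ (v w : ℝ → ℝ) (_ : ∀ t, 0 ≤ t → HasDerivAt v (g * (3 * v t - v t ^ 3 + 3 * w t)) t)
    (_ : ∀ t, 0 ≤ t → |w t| ≤ 1) (_ : |v 0| < p) (t : ℝ) (_ : 0 ≤ t)
    (_ : ∀ u, 0 ≤ u → u < t → |v u| < p), v t < p := by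
    intro v w hv hw h0 t ht hu
    set C := g * (3 * p ^ 2) with hC
    have hmono : MonotoneOn (fun s => (p - v s) * Real.exp (C * s)) (Icc 0 t) := by
      have hd : ∀ s, 0 ≤ s → HasDerivAt (fun s => (p - v s) * Real.exp (C * s))
          ((-(g * (3 * v s - v s ^ 3 + 3 * w s))) * Real.exp (C * s)
            + (p - v s) * (Real.exp (C * s) * (C * 1))) s := by
        intro s hs
        exact ((hv s hs).const_sub p).mul (((hasDerivAt_id s).const_mul C).exp)
      apply monotoneOn_of_deriv_nonneg (convex_Icc 0 t)
      · exact fun s hs => (hd s hs.1).continuousAt.continuousWithinAt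
      · exact fun s hs => (hd s (interior_subset hs).1).differentiableAt.differentiableWithinAt
      · intro s hs
        rw [interior_Icc] at hs
        rw [(hd s hs.1.le).deriv]
        have hb := abs_lt.1 (hu s hs.1.le hs.2)
        have hb2 := abs_le.1 (hw s hs.1.le)
        have e : (-(g * (3 * v s - v s ^ 3 + 3 * w s))) * Real.exp (C * s)
            + (p - v s) * (Real.exp (C * s) * (C * 1))
            = Real.exp (C * s) * (g * ((p - v s) * (3 * p ^ 2) - (3 * v s - v s ^ 3 + 3 * w s))) := by
          rw [hC]; ring
        rw [e]
        refine mul_nonneg (Real.exp_pos _).le (mul_nonneg hg.le ?_)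
        have e2 : (p - v s) * (3 * p ^ 2) - (3 * v s - v s ^ 3 + 3 * w s)
          = (p - v s) * (3 * p ^ 2 - (v s ^ 2 + v s * p + p ^ 2 - 3)) + 3 * (1 - w s) := by
          linear_combination (-1) * hp
        rw [e2]
        have h5 : v s ^ 2 ≤ p ^ 2 := by nlinarith
        have h6 : v s * p ≤ p ^ 2 := by nlinarith
        have : 0 ≤ (p - v s) * (3 * p ^ 2 - (v s ^ 2 + v s * p + p ^ 2 - 3)) :=
          mul_nonneg (by linarith) (by linarith)
        linarith
    have h1 := hmono (left_mem_Icc.2 ht) (right_mem_Icc.2 ht) ht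
    simp only [mul_zero, Real.exp_zero, mul_one] at h1
    have h2 := (abs_lt.1 h0).2
    have h3 : 0 < (p - v t) * Real.exp (C * t) := by linarith
    have := (pos_iff_pos_of_mul_pos h3).2 (Real.exp_pos _)
    linarith
  refine aux_real_ind (fun t => |v t| < p) t ?_ ?_ t ht le_rfl
  · intro s hs h
    exact ((hv s hs).continuousAt.abs).eventually (gt_mem_nhds h)
  · intro s hs _ hu
    rw [abs_lt]
    refine ⟨?_, half v w hv hw h0 s hs hu⟩
    have := half (fun t => - v t) (fun t => - w t)
      (by intro t ht
          exact (hv t ht).neg.congr_deriv (by ring))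
      (by intro t ht; rw [abs_neg]; exact hw t ht) (by simpa using h0) s hs
      (by intro u h1 h2; simpa using hu u h1 h2)
    linarith

theorem aux_phi (δ : ℝ) (hδ : 0 < δ) (hδ' : δ ≤ 1 / 4) : ∃ (φ φ' : ℝ → ℝ) (M : ℝ), 0 ≤ M ∧
    (∀ u, HasDerivAt φ (φ' u) u) ∧ (∀ u, 0 ≤ φ' u) ∧ (∀ u, u < -1 + δ / 2 → φ' u = 0) ∧
    (∀ u, 3 / 2 < u → φ' u = 0) ∧ (∀ u, -1 + δ ≤ u → u ≤ 4 / 3 → δ / 12 ≤ φ' u) ∧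
    (∀ u, |u| ≤ 5 / 2 → |φ u| ≤ M) := by
  set φ' : ℝ → ℝ := fun u => max 0 ((u - (-1 + δ / 2)) * (3 / 2 - u)) with hφ'
  have hc : Continuous φ' := by fun_prop
  have hd : ∀ u, HasDerivAt (fun x => ∫ y in (0:ℝ)..x, φ' y) (φ' u) u := fun u =>
    intervalIntegral.integral_hasDerivAt_right (hc.intervalIntegrable _ _)
      (hc.stronglyMeasurableAtFilter _ _) hc.continuousAt
  have hcφ : Continuous (fun x => ∫ y in (0:ℝ)..x, φ' y) :=
    continuous_iff_continuousAt.2 fun u => (hd u).continuousAt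
  obtain ⟨M, hM⟩ := (isCompact_Icc (a := (-5/2 : ℝ)) (b := 5/2)).exists_bound_of_continuousOn
    hcφ.continuousOn
  have hMb : ∀ u : ℝ, |u| ≤ 5 / 2 → |∫ y in (0:ℝ)..u, φ' y| ≤ M := by
    intro u hu
    have := abs_le.1 hu
    exact hM u ⟨by linarith, by linarith⟩
  refine ⟨_, φ', M, ?_, hd, fun u => le_max_left _ _, ?_, ?_, ?_, hMb⟩
  · exact (abs_nonneg _).trans (hMb 0 (by norm_num))
  · intro u hu
    apply max_eq_left
    nlinarith
  · intro u hu
    apply max_eq_left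
    nlinarith
  · intro u h1 h2
    refine le_trans ?_ (le_max_right _ _)
    nlinarith

noncomputable def ccl (y : ℝ) : ℝ := max (-1) (min 1 y)

theorem ccl_ge (y r : ℝ) (hr : r ≤ 1) (h : r ≤ y) : r ≤ ccl y :=
  le_trans (le_min hr h) (le_max_right _ _)

theorem ccl_of_ge (y r : ℝ) (hr : -1 < r) (h : r ≤ ccl y) : r ≤ y := by
  unfold ccl at h
  rcases le_max_iff.1 h with h | h
  · linarith
  · exact (le_min_iff.1 h).2

theorem ccl_abs (y : ℝ) : |ccl y| ≤ 1 := by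
  unfold ccl
  rw [abs_le]
  exact ⟨le_max_left _ _, max_le (by norm_num) (min_le_left _ _)⟩

structure Sys (n : ℕ) (γ γ' : Fin n → ℝ) (fl : Fin n → Prop) (X Y q : ℝ → Fin n → ℝ)
    (δ γ0 : ℝ) : Prop where
  hδ : 0 < δ
  hδ' : δ ≤ 1 / 4
  hγ0 : 0 < γ0
  hγ : ∀ i, γ0 ≤ γ i
  hγ' : ∀ i, 0 < γ' i
  hX : ∀ t, 0 ≤ t → ∀ i, HasDerivAt (fun u => X u i)
    (γ i * (3 * X t i - X t i ^ 3 + 3 * ccl (Y t i))) t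
  hY : ∀ t, 0 ≤ t → ∀ i, HasDerivAt (fun u => Y u i)
    (γ' i * (3 * Y t i - Y t i ^ 3 + 3 * q t i)) t
  hq : ∀ t, 0 ≤ t → ∀ i, |q t i| ≤ 1
  boxX : ∀ t, 0 ≤ t → ∀ i, |X t i| ≤ 5 / 2
  boxY : ∀ t, 0 ≤ t → ∀ i, |Y t i| ≤ 5 / 2
  good : ∀ t, 0 ≤ t → (∀ j, ¬ fl j → 5 / 4 < X t j) →
    (∀ j, X t j < -1 + δ ∨ 4 / 3 < X t j) → (∃ j, X t j < -1 + δ) → ∀ i, 5 / 6 ≤ q t i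
  init0 : ∀ j, ¬ fl j → 5 / 4 < X 0 j ∧ 2 / 3 - δ ^ 2 / 96 < Y 0 j
  init1 : ∀ j, fl j → X 0 j < -1 ∧ Y 0 j < -1 / 2

/-- the regime -/
def Reg (n : ℕ) (fl : Fin n → Prop) (X Y : ℝ → Fin n → ℝ) (δ t : ℝ) : Prop :=
  ∀ j, (¬ fl j → 5 / 4 < X t j) ∧ (X t j < -1 + δ / 2 ∨ 2 / 3 - δ ^ 2 / 48 < Y t j)

theorem speed_lb (δ x y : ℝ) (hδ : 0 < δ) (hδ' : δ ≤ 1 / 4)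
    (h1 : -1 + δ / 2 ≤ x) (h2 : x ≤ 3 / 2) (h3 : 2 / 3 - δ ^ 2 / 48 ≤ y) :
    δ ^ 2 / 16 ≤ 3 * x - x ^ 3 + 3 * ccl y := by
  have h4 := ccl_ge y (2 / 3 - δ ^ 2 / 48) (by nlinarith) h3
  have h5 : 3 * x - x ^ 3 + 2 = (2 - x) * (x + 1) ^ 2 := by ring
  have h6 : (δ / 2) ^ 2 ≤ (x + 1) ^ 2 := by
    apply pow_le_pow_left₀ <;> linarith
  have h7 : 1 / 2 * (δ / 2) ^ 2 ≤ (2 - x) * (x + 1) ^ 2 := by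
    apply mul_le_mul <;> first | linarith | positivity
  nlinarith

theorem h_lb (y : ℝ) (h : y ≤ 2) : -2 ≤ 3 * y - y ^ 3 := by
  have h5 : 3 * y - y ^ 3 + 2 = (2 - y) * (y + 1) ^ 2 := by ring
  have : 0 ≤ (2 - y) * (y + 1) ^ 2 := mul_nonneg (by linarith) (by positivity)
  linarith

section
variable {n : ℕ} {γ γ' : Fin n → ℝ} {fl : Fin n → Prop} {X Y q : ℝ → Fin n → ℝ}
    {δ γ0 : ℝ}

/-- rate of the corrected variable -/
theorem rate (S : Sys n γ γ' fl X Y q δ γ0) (φ' : ℝ → ℝ)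
    (h0 : ∀ u, 0 ≤ φ' u) (h1 : ∀ u, u < -1 + δ / 2 → φ' u = 0)
    (h2 : ∀ u, 3 / 2 < u → φ' u = 0) (h3 : ∀ u, -1 + δ ≤ u → u ≤ 4 / 3 → δ / 12 ≤ φ' u)
    (K : ℝ) (hK : 6 ≤ K * (γ0 * (δ ^ 2 / 16) * (δ / 12))) (hK0 : 0 ≤ K)
    (t : ℝ) (ht : 0 ≤ t) (hR : Reg n fl X Y δ t) (hA : ∃ j, X t j < 4 / 3) (i : Fin n)
    (hi : Y t i ≤ 1) :
    γ' i / 2 ≤ γ' i * (3 * Y t i - Y t i ^ 3 + 3 * q t i) +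
      γ' i * K * ∑ j, φ' (X t j) * (γ j * (3 * X t j - X t j ^ 3 + 3 * ccl (Y t j))) := by
  have hterm : ∀ j, 0 ≤ φ' (X t j) * (γ j * (3 * X t j - X t j ^ 3 + 3 * ccl (Y t j))) := by
    intro j
    by_cases ha : X t j < -1 + δ / 2
    · rw [h1 _ ha]; simp
    by_cases hb : 3 / 2 < X t j
    · rw [h2 _ hb]; simp
    push Not at ha hb
    have hs := speed_lb δ (X t j) (Y t j) S.hδ S.hδ' ha hb
      (((hR j).2.resolve_left (not_lt.2 ha)).le)
    refine mul_nonneg (h0 _) (mul_nonneg (S.hγ0.le.trans (S.hγ j)) (le_trans (by positivity) hs))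
  have hY2 := h_lb (Y t i) (by linarith)
  have hqi := abs_le.1 (S.hq t ht i)
  have hg' := S.hγ' i
  have hsum : 0 ≤ ∑ j, φ' (X t j) * (γ j * (3 * X t j - X t j ^ 3 + 3 * ccl (Y t j))) :=
    Finset.sum_nonneg fun j _ => hterm j
  by_cases hbad : ∃ j, -1 + δ ≤ X t j ∧ X t j ≤ 4 / 3
  · obtain ⟨j, hj1, hj2⟩ := hbad
    have hδ := S.hδ
    have ha : -1 + δ / 2 ≤ X t j := by linarith
    have hs := speed_lb δ (X t j) (Y t j) S.hδ S.hδ' ha (by linarith)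
      (((hR j).2.resolve_left (not_lt.2 ha)).le)
    have hle := Finset.single_le_sum (f := fun j => φ' (X t j) *
      (γ j * (3 * X t j - X t j ^ 3 + 3 * ccl (Y t j)))) (fun j _ => hterm j) (Finset.mem_univ j)
    have h5 : (δ / 12) * (γ0 * (δ ^ 2 / 16)) ≤
        φ' (X t j) * (γ j * (3 * X t j - X t j ^ 3 + 3 * ccl (Y t j))) := by
      have := S.hγ0
      apply mul_le_mul (h3 _ hj1 hj2) _ (by positivity) (h0 _)
      exact mul_le_mul (S.hγ j) hs (by positivity) (S.hγ0.le.trans (S.hγ j))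
    have h6 := mul_le_mul_of_nonneg_left (h5.trans hle) hK0
    have h7 : 6 ≤ K * ∑ j, φ' (X t j) * (γ j * (3 * X t j - X t j ^ 3 + 3 * ccl (Y t j))) := by
      refine le_trans ?_ h6
      linarith
    rw [mul_assoc, ← mul_add, div_eq_mul_inv]
    apply mul_le_mul_of_nonneg_left _ hg'.le
    norm_num
    linarith
  · push Not at hbad
    have hdich : ∀ j, X t j < -1 + δ ∨ 4 / 3 < X t j := by
      intro j
      by_cases h : X t j < -1 + δ
      · exact Or.inl h
      · exact Or.inr (hbad j (not_lt.1 h))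
    obtain ⟨j, hj⟩ := hA
    have hg := S.good t ht (fun j => (hR j).1) hdich
      ⟨j, (hdich j).resolve_right (by linarith)⟩ i
    have : 0 ≤ γ' i * K * ∑ j, φ' (X t j) * (γ j * (3 * X t j - X t j ^ 3 + 3 * ccl (Y t j))) :=
      mul_nonneg (mul_nonneg hg'.le hK0) hsum
    have h8 : γ' i * (1 / 2) ≤ γ' i * (3 * Y t i - Y t i ^ 3 + 3 * q t i) :=
      mul_le_mul_of_nonneg_left (by linarith) hg'.le
    linarith

/-- growth of `Y` with bounded drop `D γ'`, where `D` depends only on `δ`, `γ0`, `n`. -/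
theorem exists_drop (n : ℕ) (δ γ0 : ℝ) (hδ : 0 < δ) (hδ' : δ ≤ 1 / 4) (hγ0 : 0 < γ0) :
    ∃ D : ℝ, 0 ≤ D ∧ ∀ (γ γ' : Fin n → ℝ) (fl : Fin n → Prop) (X Y q : ℝ → Fin n → ℝ),
      Sys n γ γ' fl X Y q δ γ0 → ∀ t0 t1 : ℝ, 0 ≤ t0 → t0 ≤ t1 →
      (∀ t ∈ Ioo t0 t1, Reg n fl X Y δ t) → (∀ t ∈ Ioo t0 t1, ∃ j, X t j < 4 / 3) → ∀ i,
      min 1 (Y t0 i + γ' i / 2 * (t1 - t0)) - D * γ' i ≤ Y t1 i := by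
  obtain ⟨φ, φ', M, hM, hd, h0, h1, h2, h3, hb⟩ := aux_phi δ hδ hδ'
  set κ := γ0 * (δ ^ 2 / 16) * (δ / 12) with hκ
  have hκ0 : 0 < κ := by positivity
  refine ⟨6 / κ * (n * (2 * M)), by positivity, ?_⟩
  intro γ γ' fl X Y q S t0 t1 ht0 ht01 hR hA i
  have hg' := S.hγ' i
  have := aux_gain (fun t => Y t i) (fun t => γ' i * (6 / κ) * ∑ j, φ (X t j))
    (fun t => γ' i * (3 * Y t i - Y t i ^ 3 + 3 * q t i))
    (fun t => γ' i * (6 / κ) * ∑ j, φ' (X t j) * (γ j * (3 * X t j - X t j ^ 3 + 3 * ccl (Y t j))))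
    t0 t1 1 (γ' i / 2) (6 / κ * (n * (2 * M)) * γ' i) ht01 (by positivity)
    (fun t ht => S.hY t (ht0.trans ht.1) i)
    (fun t ht => by
      apply HasDerivAt.const_mul
      apply HasDerivAt.fun_sum
      intro j _
      exact (hd (X t j)).comp t (S.hX t (ht0.trans ht.1) j))
    (by
      intro s hs t ht
      have e : γ' i * (6 / κ) * ∑ j, φ (X s j) - γ' i * (6 / κ) * ∑ j, φ (X t j)
        = γ' i * (6 / κ) * ∑ j, (φ (X s j) - φ (X t j)) := by
        rw [Finset.sum_sub_distrib]; ring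
      rw [e]
      have h5 : ∑ j : Fin n, (φ (X s j) - φ (X t j)) ≤ ∑ j : Fin n, 2 * M := by
        apply Finset.sum_le_sum
        intro j _
        have a1 := abs_le.1 (hb _ (S.boxX s (ht0.trans hs.1) j))
        have a2 := abs_le.1 (hb _ (S.boxX t (ht0.trans ht.1) j))
        linarith
      simp only [Finset.sum_const, Finset.card_univ, Fintype.card_fin, nsmul_eq_mul] at h5
      have := mul_le_mul_of_nonneg_left h5 (show 0 ≤ γ' i * (6 / κ) by positivity)
      linarith)
    (fun t ht hY => rate S φ' h0 h1 h2 h3 (6 / κ) (by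
        rw [← hκ]; field_simp; exact le_rfl) (by positivity) t (ht0.trans ht.1.le) (hR t ht) (hA t ht) i hY)
  exact this

theorem reg_open (S : Sys n γ γ' fl X Y q δ γ0) (t : ℝ) (ht : 0 ≤ t) (h : Reg n fl X Y δ t) :
    ∀ᶠ u in 𝓝 t, Reg n fl X Y δ u := by
  unfold Reg
  rw [eventually_all]
  intro j
  have cX := (S.hX t ht j).continuousAt
  have cY := (S.hY t ht j).continuousAt
  apply Eventually.and
  · by_cases hf : fl j
    · exact Eventually.of_forall fun u h => absurd hf h
    · filter_upwards [cX.eventually (lt_mem_nhds ((h j).1 hf))] with u hu _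
      exact hu
  · rcases (h j).2 with h | h
    · filter_upwards [cX.eventually (gt_mem_nhds h)] with u hu
      exact Or.inl hu
    · filter_upwards [cY.eventually (lt_mem_nhds h)] with u hu
      exact Or.inr hu

/-- crossing of `-1` by a flipping variable -/
theorem crossing (S : Sys n γ γ' fl X Y q δ γ0) (t : ℝ) (ht : 0 ≤ t) (j : Fin n) (hf : fl j)
    (hX : -1 < X t j) : ∃ u, 0 ≤ u ∧ u ≤ t ∧ 2 / 3 ≤ Y u j := by
  by_contra hcon
  push Not at hcon
  have := aux_barrier (fun u => - X u j) _ 0 t 1 ht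
    (fun u hu => (S.hX u hu.1 j).neg) (by linarith [(S.init1 j hf).1]) (by
      intro u hu hu1
      have hx : X u j = -1 := by linarith
      have hy := hcon u hu.1 hu.2.le
      have : ccl (Y u j) < 2 / 3 := by
        by_contra h
        exact absurd (ccl_of_ge _ _ (by norm_num) (not_lt.1 h)) (not_le.2 hy)
      have hg := S.hγ0.trans_le (S.hγ j)
      rw [hx, ← mul_neg]
      apply mul_pos hg
      linarith)
  linarith

/-- lower bound of Y at any time where `X` is beyond `-1`. -/
theorem Y_lb (S : Sys n γ γ' fl X Y q δ γ0) (D : ℝ)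
    (hD : ∀ t0 t1 : ℝ, 0 ≤ t0 → t0 ≤ t1 →
      (∀ t ∈ Ioo t0 t1, Reg n fl X Y δ t) → (∀ t ∈ Ioo t0 t1, ∃ j, X t j < 4 / 3) → ∀ i,
      min 1 (Y t0 i + γ' i / 2 * (t1 - t0)) - D * γ' i ≤ Y t1 i)
    (hDη : ∀ i, D * γ' i < δ ^ 2 / 96)
    (t : ℝ) (ht : 0 ≤ t) (hR : ∀ u, 0 ≤ u → u < t → Reg n fl X Y δ u)
    (hA : ∀ u, 0 ≤ u → u < t → ∃ j, X u j < 4 / 3) (j : Fin n) (hf : fl j)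
    (hX : -1 < X t j) : 2 / 3 - δ ^ 2 / 96 < Y t j := by
  obtain ⟨u, hu0, hut, hYu⟩ := crossing S t ht j hf hX
  have h1 := hD u t hu0 hut (fun s hs => hR s (hu0.trans hs.1.le) hs.2)
    (fun s hs => hA s (hu0.trans hs.1.le) hs.2) j
  have h2 : 2 / 3 ≤ min 1 (Y u j + γ' j / 2 * (t - u)) := by
    apply le_min (by norm_num)
    have := S.hγ' j
    have : 0 ≤ γ' j / 2 * (t - u) := mul_nonneg (by linarith) (by linarith)
    linarith
  linarith [hDη j]

theorem reg_all (S : Sys n γ γ' fl X Y q δ γ0) (D : ℝ)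
    (hD : ∀ t0 t1 : ℝ, 0 ≤ t0 → t0 ≤ t1 →
      (∀ t ∈ Ioo t0 t1, Reg n fl X Y δ t) → (∀ t ∈ Ioo t0 t1, ∃ j, X t j < 4 / 3) → ∀ i,
      min 1 (Y t0 i + γ' i / 2 * (t1 - t0)) - D * γ' i ≤ Y t1 i)
    (hDη : ∀ i, D * γ' i < δ ^ 2 / 96) (H : ℝ)
    (hA : ∀ u, 0 ≤ u → u < H → ∃ j, X u j < 4 / 3) :
    ∀ t, 0 ≤ t → t ≤ H → Reg n fl X Y δ t := by
  have hδ := S.hδ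
  have hδ' := S.hδ'
  have hδ2 : 0 < δ ^ 2 := by positivity
  have hδ3 : δ ^ 2 ≤ 1 := by nlinarith
  refine aux_real_ind _ H (fun t ht h => reg_open S t ht h) ?_
  intro t ht htH hR j
  by_cases hf : fl j
  · refine ⟨fun h => absurd hf h, ?_⟩
    by_cases hx : X t j < -1 + δ / 2
    · exact Or.inl hx
    · right
      have := Y_lb S D hD hDη t ht hR (fun u h0 h1 => hA u h0 (h1.trans_le htH)) j hf (by linarith)
      linarith
  · have hi := S.init0 j hf
    have hy : 2 / 3 - δ ^ 2 / 48 < Y t j := by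
      have h1 := hD 0 t le_rfl ht (fun s hs => hR s hs.1.le hs.2)
        (fun s hs => hA s hs.1.le (hs.2.trans_le htH)) j
      have h2 : 2 / 3 - δ ^ 2 / 96 ≤ min 1 (Y 0 j + γ' j / 2 * (t - 0)) := by
        apply le_min (by linarith)
        have := S.hγ' j
        have : 0 ≤ γ' j / 2 * (t - 0) := mul_nonneg (by linarith) (by linarith)
        linarith
      linarith [hDη j]
    refine ⟨fun _ => ?_, Or.inr hy⟩
    rcases ht.eq_or_lt with h | h
    · rw [← h]; exact hi.1
    · refine aux_barrier_strict (fun u => X u j) _ 0 t (5 / 4) h (fun u hu => S.hX u hu.1 j) hi.1.le ?_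
      intro u hu hxu
      have hxu : X u j = 5 / 4 := hxu
      have hyu : 2 / 3 - δ ^ 2 / 48 ≤ Y u j := by
        rcases hu.2.eq_or_lt with h' | h'
        · rw [h']; exact hy.le
        · exact ((hR u hu.1 h' j).2.resolve_left (by rw [hxu]; linarith)).le
      have := speed_lb δ (X u j) (Y u j) hδ hδ' (by linarith) (by linarith) hyu
      exact mul_pos (S.hγ0.trans_le (S.hγ j)) (lt_of_lt_of_le (by positivity) this)

theorem core (S : Sys n γ γ' fl X Y q δ γ0) (D : ℝ) (hD0 : 0 ≤ D)
    (hD : ∀ t0 t1 : ℝ, 0 ≤ t0 → t0 ≤ t1 →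
      (∀ t ∈ Ioo t0 t1, Reg n fl X Y δ t) → (∀ t ∈ Ioo t0 t1, ∃ j, X t j < 4 / 3) → ∀ i,
      min 1 (Y t0 i + γ' i / 2 * (t1 - t0)) - D * γ' i ≤ Y t1 i)
    (hμ : ∀ i, γ' i < δ ^ 2 / (100 * (D + 1))) (hfl : ∃ j, fl j) :
    ∃ T : ℝ, 1 ≤ T ∧ (∀ i, 5 / 4 < X T i ∧ 2 / 3 - δ ^ 2 / 96 < Y T i) ∧
      (∀ i, ¬ fl i → ∀ t ∈ Icc 0 T, X t i ≠ 0) ∧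
      (∀ i, fl i → ∃! t : ℝ, t ∈ Icc 0 T ∧ X t i = 0) := by
  have hδ := S.hδ
  have hδ' := S.hδ'
  have hδ2 : 0 < δ ^ 2 := by positivity
  have hδ3 : δ ^ 2 ≤ 1 / 16 := by nlinarith
  have hμ' : ∀ i, γ' i * (100 * (D + 1)) < δ ^ 2 := fun i => by
    have := hμ i
    rwa [lt_div_iff₀ (by positivity)] at this
  have hDη : ∀ i, D * γ' i < δ ^ 2 / 96 := fun i => by
    have h1 := hμ' i
    have h2 := S.hγ' i
    have : 0 ≤ D * γ' i := by positivity
    linarith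
  set A : Set ℝ := {t | 0 ≤ t ∧ ∀ j, 4 / 3 ≤ X t j} with hA
  have hAne : A.Nonempty := by
    by_contra hne
    rw [not_nonempty_iff_eq_empty] at hne
    have hA' : ∀ u, 0 ≤ u → ∃ j, X u j < 4 / 3 := by
      intro u hu
      by_contra h
      push Not at h
      have : u ∈ A := ⟨hu, h⟩
      rw [hne] at this
      exact this
    have hR : ∀ t, 0 ≤ t → Reg n fl X Y δ t := fun t ht =>
      reg_all S D hD hDη t (fun u h0 _ => hA' u h0) t ht le_rfl
    have hYev : ∀ i, ∀ᶠ t in atTop, 5 / 6 ≤ Y t i := by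
      intro i
      filter_upwards [eventually_ge_atTop (0 : ℝ), eventually_ge_atTop (7 / γ' i)] with t ht ht2
      have h1 := hD 0 t le_rfl ht (fun s hs => hR s hs.1.le) (fun s hs => hA' s hs.1.le) i
      have h2 : 1 ≤ min 1 (Y 0 i + γ' i / 2 * (t - 0)) := by
        apply le_min le_rfl
        rw [div_le_iff₀ (S.hγ' i)] at ht2
        have := abs_le.1 (S.boxY 0 le_rfl i)
        linarith
      linarith [hDη i]
    obtain ⟨t1, ht1⟩ := eventually_atTop.1 (eventually_all.2 hYev)
    have ht1' : ∀ t, max t1 0 ≤ t → ∀ i, 5 / 6 ≤ Y t i := fun t ht => ht1 t ((le_max_left _ _).trans ht)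
    have hXev : ∀ i, ∀ᶠ t in atTop, 4 / 3 ≤ X t i := by
      intro i
      have hgi := S.hγ0.trans_le (S.hγ i)
      filter_upwards [eventually_ge_atTop (max t1 0), eventually_ge_atTop (max t1 0 + 8 / γ i)]
        with t ht ht2
      have h0 : 0 ≤ max t1 0 := le_max_right _ _
      have := aux_gain (fun t => X t i) (fun _ => 0) _ (fun _ => 0) (max t1 0) t (3 / 2) (γ i / 2) 0
        ht (by positivity) (fun u hu => S.hX u (h0.trans hu.1) i) (fun u _ => hasDerivAt_const _ _)
        (by intros; simp) (by
          intro u hu hxu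
          have h1 := h_lb (X u i) (by linarith)
          have h2 := ccl_ge _ _ (by norm_num) (ht1' u hu.1.le i)
          have : γ i * (1 / 2) ≤ γ i * (3 * X u i - X u i ^ 3 + 3 * ccl (Y u i)) :=
            mul_le_mul_of_nonneg_left (by linarith) hgi.le
          linarith)
      have h3 : 4 / 3 ≤ min (3 / 2) (X (max t1 0) i + γ i / 2 * (t - max t1 0)) := by
        apply le_min (by norm_num)
        have h4 : 8 / γ i ≤ t - max t1 0 := by linarith
        rw [div_le_iff₀ hgi] at h4
        have := abs_le.1 (S.boxX (max t1 0) h0 i)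
        linarith
      linarith
    obtain ⟨t, h1, h2⟩ := ((eventually_all.2 hXev).and (eventually_ge_atTop (0 : ℝ))).exists
    have : t ∈ A := ⟨h2, h1⟩
    rw [hne] at this
    exact this
  have hAbdd : BddBelow A := ⟨0, fun t ht => ht.1⟩
  have hcl : IsClosed A := by
    have e : A = ⋂ j, (Ici 0 ∩ (fun t => X t j) ⁻¹' (Ici (4 / 3))) := by
      obtain ⟨j0, _⟩ := hfl
      ext t
      simp only [hA, mem_ofPred_eq, mem_iInter, mem_inter_iff, mem_Ici, mem_preimage]
      exact ⟨fun h j => ⟨h.1, h.2 j⟩, fun h => ⟨(h j0).1, fun j => (h j).2⟩⟩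
    rw [e]
    apply isClosed_iInter
    intro j
    exact ContinuousOn.preimage_isClosed_of_isClosed
      (fun t ht => (S.hX t ht j).continuousAt.continuousWithinAt) isClosed_Ici isClosed_Ici
  set T := sInf A with hT
  have hTA : T ∈ A := hcl.csInf_mem hAne hAbdd
  have hT0 : 0 ≤ T := hTA.1
  have hA' : ∀ u, 0 ≤ u → u < T → ∃ j, X u j < 4 / 3 := by
    intro u hu huT
    by_contra h
    push Not at h
    exact notMem_of_lt_csInf huT hAbdd ⟨hu, h⟩
  have hR := reg_all S D hD hDη T hA'
  have hYfl : ∀ j, fl j → 2 / 3 - δ ^ 2 / 96 < Y T j := fun j hf =>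
    Y_lb S D hD hDη T hT0 (fun u h0 h1 => hR u h0 h1.le) hA' j hf (by linarith [hTA.2 j])
  have hTbig : 1 ≤ 27 * (δ ^ 2 / (100 * (D + 1))) * T := by
    obtain ⟨j, hf⟩ := hfl
    have h1 := hYfl j hf
    have h2 := (S.init1 j hf).2
    have h3 := Convex.norm_image_sub_le_of_norm_hasDerivWithin_le (𝕜 := ℝ)
      (f := fun u => Y u j) (f' := fun t => γ' j * (3 * Y t j - Y t j ^ 3 + 3 * q t j))
      (s := Icc 0 T) (C := γ' j * 27) (x := 0) (y := T)
      (fun u hu => (S.hY u hu.1 j).hasDerivWithinAt) (by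
        intro u hu
        have b1 := abs_le.1 (S.boxY u hu.1 j)
        have b2 := abs_le.1 (S.hq u hu.1 j)
        have hg := S.hγ' j
        rw [Real.norm_eq_abs, abs_mul, abs_of_pos hg]
        apply mul_le_mul_of_nonneg_left _ hg.le
        have b3 : |Y u j ^ 3| ≤ (5 / 2) ^ 3 := by
          rw [abs_pow]
          exact pow_le_pow_left₀ (abs_nonneg _) (S.boxY u hu.1 j) 3
        have b4 := abs_le.1 b3
        rw [abs_le]
        constructor <;> linarith) (convex_Icc 0 T) (left_mem_Icc.2 hT0) (right_mem_Icc.2 hT0)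
    simp only [Real.norm_eq_abs, sub_zero, abs_of_nonneg hT0] at h3
    have h4 := (abs_le.1 h3).2
    have h5 : γ' j * 27 * T ≤ 27 * (δ ^ 2 / (100 * (D + 1))) * T := by
      apply mul_le_mul_of_nonneg_right _ hT0
      linarith [hμ j]
    linarith
  have hT2 : 100 * (D + 1) ≤ 27 * δ ^ 2 * T := by
    have e : 27 * (δ ^ 2 / (100 * (D + 1))) * T = (27 * δ ^ 2 * T) / (100 * (D + 1)) := by
      field_simp
    rwa [e, one_le_div₀ (by positivity)] at hTbig
  have hT3 : 27 * δ ^ 2 * T ≤ 2 * T := by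
    apply mul_le_mul_of_nonneg_right _ hT0
    linarith
  refine ⟨T, by linarith, ?_, ?_, ?_⟩
  · intro i
    refine ⟨by linarith [hTA.2 i], ?_⟩
    by_cases hf : fl i
    · exact hYfl i hf
    · have h1 := hD 0 T le_rfl hT0 (fun s hs => hR s hs.1.le hs.2.le)
        (fun s hs => hA' s hs.1.le hs.2) i
      have h2 := (S.init0 i hf).2
      have hg := S.hγ' i
      have h3 : D * γ' i ≤ γ' i / 2 * (T - 0) := by
        have : D ≤ T / 2 := by linarith
        have := mul_le_mul_of_nonneg_left this hg.le
        linarith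
      have h4 := hDη i
      rcases min_cases 1 (Y 0 i + γ' i / 2 * (T - 0)) with ⟨h, _⟩ | ⟨h, _⟩ <;> rw [h] at h1 <;> linarith
  · intro i hf t ht h
    have := (hR t ht.1 ht.2 i).1 hf
    linarith
  · intro i hf
    have hpos : ∀ u, 0 ≤ u → u ≤ T → X u i = 0 →
        0 < γ i * (3 * X u i - X u i ^ 3 + 3 * ccl (Y u i)) := by
      intro u h0 h1 hx
      have := speed_lb δ (X u i) (Y u i) hδ hδ' (by linarith) (by linarith)
        ((hR u h0 h1 i).2.resolve_left (by linarith)).le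
      exact mul_pos (S.hγ0.trans_le (S.hγ i)) (lt_of_lt_of_le (by positivity) this)
    have huni : ∀ u v, 0 ≤ u → u < v → v ≤ T → X u i = 0 → X v i ≠ 0 := by
      intro u v hu huv hv hx
      exact (aux_barrier_strict (fun u => X u i) _ u v 0 huv (fun s hs => S.hX s (hu.trans hs.1) i)
        hx.ge (fun s hs hs0 => hpos s (hu.trans hs.1) (hs.2.trans hv) hs0)).ne'
    have hcont : ContinuousOn (fun u => X u i) (Icc 0 T) :=
      fun u hu => (S.hX u hu.1 i).continuousAt.continuousWithinAt
    obtain ⟨t, ht, hxt⟩ := intermediate_value_Icc hT0 hcont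
      (show (0 : ℝ) ∈ Icc (X 0 i) (X T i) from
        ⟨by linarith [(S.init1 i hf).1], by linarith [hTA.2 i]⟩)
    refine ⟨t, ⟨ht, hxt⟩, ?_⟩
    rintro v ⟨hv, hxv⟩
    rcases lt_trichotomy v t with h | h | h
    · exact absurd hxt (huni v t hv.1 h ht.2 hxv)
    · exact h
    · exact absurd hxv (huni t v ht.1 h hv.2 hxt)

end

noncomputable def sg (b : Bool) : ℝ := if b then 1 else -1

theorem sg_sq (b : Bool) : sg b * sg b = 1 := by cases b <;> simp [sg]

theorem sg_ne (a b : Bool) (h : a ≠ b) : sg b = - sg a := by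
  cases a <;> cases b <;> simp_all [sg]

theorem sg_abs (b : Bool) : |sg b| = 1 := by cases b <;> simp [sg]

theorem ccl_neg (y : ℝ) : ccl (-y) = - ccl y := by
  unfold ccl
  rw [← min_neg_neg, neg_neg, ← max_neg_neg (a := (1 : ℝ)), min_max_distrib_left]
  rw [min_eq_right (by norm_num : (-1 : ℝ) ≤ 1)]

theorem ccl_sg (b : Bool) (y : ℝ) : ccl (sg b * y) = sg b * ccl y := by
  cases b <;> simp [sg, ccl_neg]

theorem Lpl_ccl (y : ℝ) : 2 * Lpl y - 1 = ccl y := by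
  unfold Lpl ccl
  split_ifs with h1 h2
  · rw [min_eq_right (by linarith), max_eq_left h1]; norm_num
  · rw [min_eq_right h2.le, max_eq_right (by linarith)]; ring
  · rw [min_eq_left (by linarith), max_eq_right (by norm_num)]; norm_num

theorem Q_close (n : ℕ) (f : (Fin n → Bool) → Fin n → Bool)
    (Q : (Fin n → ℝ) → Fin n → ℝ) (hQ : IsConversion n f Q) :
    ∃ δ : ℝ, 0 < δ ∧ δ ≤ 1 / 4 ∧ ∀ (x : Fin n → ℝ) (r : Fin n → Bool),
      (∀ j, |x j| ≤ 5 / 2) → (∀ j, 1 - δ < sg (r j) * x j) →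
      ∀ i, 5 / 6 ≤ sg (f r i) * (2 * Q x i - 1) := by
  obtain ⟨hc, hb, hw⟩ := hQ
  have hK : IsCompact (Set.Icc (fun _ => -3 : Fin n → ℝ) (fun _ => 3)) := isCompact_Icc
  have hu := hK.uniformContinuousOn_of_continuous hc.continuousOn
  rw [Metric.uniformContinuousOn_iff] at hu
  obtain ⟨ε, hε, hu⟩ := hu (1 / 12) (by norm_num)
  refine ⟨min (1 / 4) (ε / 2), by positivity, min_le_left _ _, ?_⟩
  set δ := min (1 / 4) (ε / 2) with hδ
  have hδ0 : 0 < δ := by positivity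
  have hδ1 : δ ≤ 1 / 4 := min_le_left _ _
  have hδ2 : δ ≤ ε / 2 := min_le_right _ _
  intro x r hx hr i
  have hd : dist x (fun j => x j + sg (r j) * δ) < ε := by
    refine lt_of_le_of_lt ((dist_pi_le_iff hδ0.le).2 ?_) (show δ < ε by linarith)
    intro j
    rw [Real.dist_eq, sub_add_cancel_left, abs_neg, abs_mul, sg_abs, one_mul, abs_of_pos hδ0]
  have hsd : ∀ j, |sg (r j) * δ| ≤ 1 / 4 := fun j => by
    rw [abs_mul, sg_abs, one_mul, abs_of_pos hδ0]; exact hδ1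
  have h1 := hu x (by
      constructor <;> intro j <;> have := abs_le.1 (hx j) <;> simp only [] <;> linarith)
    (fun j => x j + sg (r j) * δ) (by
      constructor <;> intro j <;> have := abs_le.1 (hx j) <;> have := abs_le.1 (hsd j) <;>
        simp only [] <;> linarith) hd
  have h2 : dist (Q x i) (Q (fun j => x j + sg (r j) * δ) i) < 1 / 12 :=
    lt_of_le_of_lt (dist_le_pi_dist _ _ i) h1
  have h3 := hw r (fun j => x j + sg (r j) * δ) (by
    intro j
    have := hr j
    cases hrj : r j <;> rw [hrj] at this <;> simp [sg, hrj] at this ⊢ <;> linarith) i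
  rw [h3, Real.dist_eq] at h2
  have h4 := abs_lt.1 h2
  cases hfi : f r i <;> rw [hfi] at h4 <;> simp [sg] at h4 ⊢ <;> linarith

theorem exists_gamma0 (n : ℕ) (γ : Fin n → ℝ) (hγ : ∀ i, 0 < γ i) :
    ∃ γ0 : ℝ, 0 < γ0 ∧ ∀ i, γ0 ≤ γ i := by
  rcases isEmpty_or_nonempty (Fin n) with h | h
  · exact ⟨1, one_pos, fun i => h.elim i⟩
  · obtain ⟨i, hi⟩ := Finite.exists_min γ
    exact ⟨γ i, hγ i, hi⟩

/-- the key inductive step in the proof of the main Theorem: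
under sufficient separation of time scales, a trajectory started in `U^s`
for a monotone non-fixed state `s` reaches `U^{f(s)}` at some time
`T ≥ T_min`, with conditions (A), (B), (C). -/
theorem stmt_11 (n : ℕ) (f : (Fin n → Bool) → Fin n → Bool)
    (Q : (Fin n → ℝ) → Fin n → ℝ) (hQ : IsConversion n f Q)
    (γ : Fin n → ℝ) (hγ : ∀ i, 0 < γ i)
    (xm : ℝ) (hxm : gcub xm = 0) (hxmu : ∀ z, gcub z = 0 → z = xm) :
    ∃ μ Tmin : ℝ, 0 < μ ∧ 0 < Tmin ∧
    ∃ U : (Fin n → Bool) → Set ((Fin n → ℝ) × (Fin n → ℝ)),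
      (∀ s, (U s).Nonempty ∧ IsOpen (U s) ∧
        U s ⊆ {p | p.1 ∈ Wset n s ∧
          ∀ i, p.1 i ∈ Set.Icc xm (-xm) ∧ p.2 i ∈ Set.Icc xm (-xm)}) ∧
      ∀ γ' : Fin n → ℝ, (∀ i, 0 < γ' i ∧ γ' i < μ) →
      ∀ s : Fin n → Bool,
        (∀ sst : Fin n → Bool,
          (∀ i, f s i = s i → sst i = s i) → sst ≠ f s → f sst = f s) →
        f s ≠ s →
      ∀ x y : ℝ → Fin n → ℝ, IsSolD2 n γ γ' Q x y →
      (x 0, y 0) ∈ U s →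
      ∃ T : ℝ, Tmin ≤ T ∧
        (x T, y T) ∈ U (f s) ∧
        (∀ i, f s i = s i → ∀ t ∈ Set.Icc (0 : ℝ) T, x t i ≠ 0) ∧
        (∀ i, f s i ≠ s i → ∃! t : ℝ, t ∈ Set.Icc (0 : ℝ) T ∧ x t i = 0) := by
  obtain ⟨δ, hδ, hδ', hQδ⟩ := Q_close n f Q hQ
  obtain ⟨γ0, hγ0, hγ0'⟩ := exists_gamma0 n γ hγ
  obtain ⟨D, hD0, hD⟩ := exists_drop n δ γ0 hδ hδ' hγ0
  have hδ2 : 0 < δ ^ 2 := by positivity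
  have hδ3 : δ ^ 2 ≤ 1 / 16 := by nlinarith
  have hxm' : 3 * xm - xm ^ 3 - 3 = 0 := hxm
  have hp : 3 * (-xm) - (-xm) ^ 3 = -3 := by linear_combination (-1) * hxm'
  have hx1 : xm < -2 := by
    by_contra h
    push Not at h
    nlinarith [mul_nonneg (sq_nonneg (xm - 1)) (by linarith : 0 ≤ xm + 2)]
  have hx2 : -5 / 2 < xm := by
    by_contra h
    push Not at h
    nlinarith [mul_nonneg (by linarith : 0 ≤ -xm - 5 / 2) (sq_nonneg xm), sq_nonneg xm]
  set U : (Fin n → Bool) → Set ((Fin n → ℝ) × (Fin n → ℝ)) := fun s =>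
    {p | ∀ i, (5 / 4 < sg (s i) * p.1 i ∧ 2 / 3 - δ ^ 2 / 96 < sg (s i) * p.2 i) ∧
      (|p.1 i| < -xm ∧ |p.2 i| < -xm)} with hU
  refine ⟨δ ^ 2 / (100 * (D + 1)), 1, by positivity, one_pos, U, ?_, ?_⟩
  · intro s
    refine ⟨⟨(fun i => sg (s i) * (3 / 2), fun i => sg (s i) * (3 / 2)), ?_⟩, ?_, ?_⟩
    · intro i
      simp only [← mul_assoc, sg_sq, abs_mul, sg_abs]
      rw [abs_of_pos (by norm_num : (0 : ℝ) < 3 / 2)]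
      exact ⟨⟨by norm_num, by linarith⟩, by linarith, by linarith⟩
    · have e : U s = ⋂ i, {p | (5 / 4 < sg (s i) * p.1 i ∧ 2 / 3 - δ ^ 2 / 96 < sg (s i) * p.2 i) ∧
          (|p.1 i| < -xm ∧ |p.2 i| < -xm)} := by
        ext p
        rw [mem_iInter]
        rfl
      rw [e]
      apply isOpen_iInter_of_finite
      intro i
      have c1 : Continuous (fun p : (Fin n → ℝ) × (Fin n → ℝ) => p.1 i) := by fun_prop
      have c2 : Continuous (fun p : (Fin n → ℝ) × (Fin n → ℝ) => p.2 i) := by fun_prop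
      exact ((isOpen_lt continuous_const (continuous_const.mul c1)).inter
        (isOpen_lt continuous_const (continuous_const.mul c2))).inter
        ((isOpen_lt c1.abs continuous_const).inter (isOpen_lt c2.abs continuous_const))
    · intro p hpU
      refine ⟨?_, ?_⟩
      · intro i
        have := (hpU i).1.1
        cases hsi : s i <;> rw [hsi] at this <;> simp [sg] at this ⊢ <;> linarith
      · intro i
        have h1 := abs_lt.1 (hpU i).2.1
        have h2 := abs_lt.1 (hpU i).2.2
        exact ⟨⟨by linarith, by linarith⟩, by linarith, by linarith⟩
  · intro γ' hγ' s hmono hfix x y hsol h0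
    have hxd : ∀ i t, 0 ≤ t → HasDerivAt (fun u => x u i)
        (γ i * (3 * x t i - x t i ^ 3 + 3 * ccl (y t i))) t := fun i t ht =>
      ((hsol i t ht).1).congr_deriv (by rw [← Lpl_ccl]; unfold gcub; ring)
    have hyd : ∀ i t, 0 ≤ t → HasDerivAt (fun u => y u i)
        (γ' i * (3 * y t i - y t i ^ 3 + 3 * (2 * Q (x t) i - 1))) t := fun i t ht =>
      ((hsol i t ht).2).congr_deriv (by unfold gcub; ring)
    have hq1 : ∀ t i, |2 * Q (x t) i - 1| ≤ 1 := by
      intro t i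
      have := hQ.2.1 (x t) i
      rw [abs_le]
      constructor <;> linarith [this.1, this.2]
    have bx : ∀ i t, 0 ≤ t → |x t i| < -xm := fun i =>
      aux_box (fun t => x t i) (fun t => ccl (y t i)) (γ i) (-xm) (hγ i) hp (by linarith)
        (hxd i) (fun t _ => ccl_abs _) (h0 i).2.1
    have byy : ∀ i t, 0 ≤ t → |y t i| < -xm := fun i =>
      aux_box (fun t => y t i) (fun t => 2 * Q (x t) i - 1) (γ' i) (-xm) (hγ' i).1 hp (by linarith)
        (hyd i) (fun t _ => hq1 t i) (h0 i).2.2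
    have hcube : ∀ (b : Bool) (z : ℝ), (sg b * z) ^ 3 = sg b * z ^ 3 := by
      intro b z
      cases b <;> simp [sg]
      ring
    have hneq : ∀ i, f s i ≠ s i → sg (s i) = - sg (f s i) := by
      intro i h
      exact sg_ne _ _ h
    have S : Sys n γ γ' (fun i => f s i ≠ s i) (fun t i => sg (f s i) * x t i)
        (fun t i => sg (f s i) * y t i) (fun t i => sg (f s i) * (2 * Q (x t) i - 1)) δ γ0 := by
      refine ⟨hδ, hδ', hγ0, hγ0', fun i => (hγ' i).1, ?_, ?_, ?_, ?_, ?_, ?_, ?_, ?_⟩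
      · intro t ht i
        refine ((hxd i t ht).const_mul (sg (f s i))).congr_deriv ?_
        rw [hcube, ccl_sg]; ring
      · intro t ht i
        refine ((hyd i t ht).const_mul (sg (f s i))).congr_deriv ?_
        rw [hcube]; ring
      · intro t ht i
        rw [abs_mul, sg_abs, one_mul]
        exact hq1 t i
      · intro t ht i
        rw [abs_mul, sg_abs, one_mul]
        linarith [bx i t ht]
      · intro t ht i
        rw [abs_mul, sg_abs, one_mul]
        linarith [byy i t ht]
      · intro t ht hnf hd hex i
        have hr : f (fun j => decide (0 < x t j)) = f s := by
          apply hmono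
          · intro j hj
            have := hnf j (by simpa using hj)
            rw [hj] at this
            cases hsj : s j <;> rw [hsj] at this <;> simp [sg] at this ⊢ <;> linarith
          · obtain ⟨j, hj⟩ := hex
            intro he
            have he' := congrFun he j
            rw [← he'] at hj
            by_cases hpos : 0 < x t j
            · simp [hpos, sg] at hj
              linarith
            · simp [hpos, sg] at hj
              linarith
        have := hQδ (x t) (fun j => decide (0 < x t j)) (fun j => by linarith [bx j t ht]) (by
          intro j
          have hdj := hd j
          by_cases hpos : 0 < x t j
          · cases hf : f s j <;> rw [hf] at hdj <;> simp [hpos, sg] at hdj ⊢ <;>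
              rcases hdj with h | h <;> linarith
          · cases hf : f s j <;> rw [hf] at hdj <;> simp [hpos, sg] at hdj ⊢ <;>
              rcases hdj with h | h <;> linarith) i
        rw [hr] at this
        exact this
      · intro j hj
        have hj' : f s j = s j := by simpa using hj
        have := (h0 j).1
        rw [← hj'] at this
        exact this
      · intro j hj
        have := (h0 j).1
        rw [hneq j hj] at this
        have h1 := this.1
        have h2 := this.2
        simp only at h1 h2
        constructor <;> linarith
    obtain ⟨T, hT1, hTU, hB, hC⟩ := core S D hD0 (hD _ _ _ _ _ _ S) (fun i => (hγ' i).2) (by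
      by_contra h
      push Not at h
      exact hfix (funext h))
    have hsg0 : ∀ b, sg b ≠ 0 := by
      intro b
      cases b <;> simp [sg]
    have hT0 : 0 ≤ T := by linarith
    refine ⟨T, hT1, ?_, ?_, ?_⟩
    · intro i
      exact ⟨hTU i, bx i T hT0, byy i T hT0⟩
    · intro i hi t ht hx
      exact hB i (by simpa using hi) t ht (by simp [hx])
    · intro i hi
      have := hC i hi
      simpa [mul_eq_zero, hsg0] using this
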